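/- Let σ₁, σ₂, σ₃ be the Pauli matrices and define the 4×4 complex matrices γ₀ = σ₃ ⊗ I₂, γ₁ = (iσ₂) ⊗ σ₁, γ₂ = (iσ₂) ⊗ σ₂, γ₄ = (iσ₁) ⊗ I₂ (Kronecker products), and set γ₊ = (γ₄ + γ₀)/√2, γ₋ = (γ₄ − γ₀)/√2. For b ∈ ℝ, let M(b) = i·(3·I₄ + γ₋γ₊) + 2b·γ₁γ₂. Then M(b) has nonzero kernel if and only if 4b² = 1 or 4b² = 9, and in each of these cases the kernel of M(b) is a 1-dimensional complex subspace of ℂ⁴. -/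

import Mathlib

open Matrix Complex
open scoped Kronecker

noncomputable section

/-- Pauli matrix σ₁. -/
def σ1 : Matrix (Fin 2) (Fin 2) ℂ := !![0, 1; 1, 0]
/-- Pauli matrix σ₂. -/
def σ2 : Matrix (Fin 2) (Fin 2) ℂ := !![0, -I; I, 0]
/-- Pauli matrix σ₃. -/
def σ3 : Matrix (Fin 2) (Fin 2) ℂ := !![1, 0; 0, -1]

/-- γ₀ = σ₃ ⊗ I₂ (timelike). -/
def γ0 : Matrix (Fin 2 × Fin 2) (Fin 2 × Fin 2) ℂ := σ3 ⊗ₖ (1 : Matrix (Fin 2) (Fin 2) ℂ)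
/-- γ₁ = (iσ₂) ⊗ σ₁. -/
def γ1 : Matrix (Fin 2 × Fin 2) (Fin 2 × Fin 2) ℂ := (I • σ2) ⊗ₖ σ1
/-- γ₂ = (iσ₂) ⊗ σ₂. -/
def γ2 : Matrix (Fin 2 × Fin 2) (Fin 2 × Fin 2) ℂ := (I • σ2) ⊗ₖ σ2
/-- γ₃ = (iσ₂) ⊗ σ₃. -/
def γ3 : Matrix (Fin 2 × Fin 2) (Fin 2 × Fin 2) ℂ := (I • σ2) ⊗ₖ σ3
/-- γ₄ = (iσ₁) ⊗ I₂. -/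
def γ4 : Matrix (Fin 2 × Fin 2) (Fin 2 × Fin 2) ℂ := (I • σ1) ⊗ₖ (1 : Matrix (Fin 2) (Fin 2) ℂ)

/-- γ₊ = (γ₄ + γ₀)/√2. -/
def γplus : Matrix (Fin 2 × Fin 2) (Fin 2 × Fin 2) ℂ :=
  ((Real.sqrt 2 : ℝ) : ℂ)⁻¹ • (γ4 + γ0)
/-- γ₋ = (γ₄ − γ₀)/√2. -/
def γminus : Matrix (Fin 2 × Fin 2) (Fin 2 × Fin 2) ℂ :=
  ((Real.sqrt 2 : ℝ) : ℂ)⁻¹ • (γ4 - γ0)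

/-!
Since `γ₋γ₊ = σ₂ ⊗ 1 - 1` and `γ₁γ₂ = -i (1 ⊗ σ₃)`, the matrix `M(b)` is `i` times the Kronecker sum
of `2 + σ₂` and `-2bσ₃`. Both `σ₂` and `σ₃` are diagonalizable with simple eigenvalues `±1`, so the
dimension of the kernel is the number of pairs of signs `(s, t)` with `2 + s = 2bt`. Squaring gives
`4b² = (2 + s)²`, which is `9` or `1` and determines `s`; then `t` is determined as well.
-/

section KroneckerSum

variable {m n R K : Type*} [Fintype m] [Fintype n] [DecidableEq m] [DecidableEq n]
  [CommRing R] [Field K]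

theorem finrank_ker_mulVecLin_of_mul_eq_mul_diagonal {A P : Matrix n n K} {w : n → K}
    (hP : IsUnit P.det) (h : A * P = P * diagonal w) :
    Module.finrank K (LinearMap.ker A.mulVecLin) = Nat.card {i // w i = 0} := by
  classical
  have hrank : A.rank = Fintype.card {i // w i ≠ 0} := by
    rw [← rank_mul_eq_left_of_isUnit_det P A hP, h, rank_mul_eq_right_of_isUnit_det P _ hP,
      rank_diagonal]
  have hnullity : A.rank + Module.finrank K (LinearMap.ker A.mulVecLin) = Fintype.card n := by
    simpa only [Matrix.rank, Module.finrank_fintype_fun_eq_card] using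
      A.mulVecLin.finrank_range_add_finrank_ker
  have hcompl := Fintype.card_subtype_compl (fun i => w i = 0)
  have hle := Fintype.card_subtype_le (fun i => w i = 0)
  rw [Nat.card_eq_fintype_card]
  simp only [ne_eq] at hrank
  omega

theorem kroneckerSum_mul_kronecker {A P : Matrix m m R} {B Q : Matrix n n R} {u : m → R}
    {v : n → R} (hA : A * P = P * diagonal u) (hB : B * Q = Q * diagonal v) :
    (A ⊗ₖ (1 : Matrix n n R) + (1 : Matrix m m R) ⊗ₖ B) * (P ⊗ₖ Q) =
      (P ⊗ₖ Q) * diagonal fun p => u p.1 + v p.2 := by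
  have hdiag : (diagonal fun p : m × n => u p.1 + v p.2) =
      diagonal u ⊗ₖ (1 : Matrix n n R) + (1 : Matrix m m R) ⊗ₖ diagonal v := by
    simp only [← diagonal_one, diagonal_kronecker_diagonal, diagonal_add, mul_one, one_mul]
  simp only [hdiag, add_mul, mul_add, ← mul_kronecker_mul, hA, hB, Matrix.one_mul, Matrix.mul_one]

theorem finrank_ker_kroneckerSum {A P : Matrix m m K} {B Q : Matrix n n K} {u : m → K}
    {v : n → K} (hP : IsUnit P.det) (hQ : IsUnit Q.det) (hA : A * P = P * diagonal u)
    (hB : B * Q = Q * diagonal v) :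
    Module.finrank K (LinearMap.ker
        (A ⊗ₖ (1 : Matrix n n K) + (1 : Matrix m m K) ⊗ₖ B).mulVecLin) =
      Nat.card {p : m × n // u p.1 + v p.2 = 0} := by
  refine finrank_ker_mulVecLin_of_mul_eq_mul_diagonal ?_ (kroneckerSum_mul_kronecker hA hB)
  rw [det_kronecker]
  exact (hP.pow _).mul (hQ.pow _)

end KroneckerSum

theorem σ1_mul_self : σ1 * σ1 = 1 := by
  simp [σ1, one_fin_two]

theorem σ2_mul_self : σ2 * σ2 = 1 := by
  simp [σ2, one_fin_two]

theorem σ3_mul_self : σ3 * σ3 = 1 := by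
  simp [σ3, one_fin_two]

theorem σ1_mul_σ2 : σ1 * σ2 = I • σ3 := by
  simp [σ1, σ2, σ3]

theorem σ1_mul_σ3 : σ1 * σ3 = -I • σ2 := by
  simp [σ1, σ2, σ3]

theorem σ3_mul_σ1 : σ3 * σ1 = I • σ2 := by
  simp [σ1, σ2, σ3]

theorem γ0_mul_self : γ0 * γ0 = 1 := by
  rw [γ0, ← mul_kronecker_mul, σ3_mul_self, Matrix.one_mul, one_kronecker_one]

theorem γ4_mul_self : γ4 * γ4 = -1 := by
  rw [γ4, ← mul_kronecker_mul, smul_mul_smul_comm, σ1_mul_self, I_mul_I, Matrix.one_mul,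
    smul_kronecker, one_kronecker_one, neg_one_smul]

theorem γ4_mul_γ0 : γ4 * γ0 = σ2 ⊗ₖ (1 : Matrix (Fin 2) (Fin 2) ℂ) := by
  rw [γ4, γ0, ← mul_kronecker_mul, smul_mul_assoc, σ1_mul_σ3, smul_smul, mul_neg, I_mul_I,
    neg_neg, one_smul, Matrix.one_mul]

theorem γ0_mul_γ4 : γ0 * γ4 = -(γ4 * γ0) := by
  rw [γ4_mul_γ0, γ4, γ0, ← mul_kronecker_mul, mul_smul_comm, σ3_mul_σ1, smul_smul, I_mul_I,
    smul_kronecker, neg_one_smul, Matrix.one_mul]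

theorem γminus_mul_γplus : γminus * γplus = γ4 * γ0 - 1 := by
  have hsqrt : ((Real.sqrt 2 : ℝ) : ℂ)⁻¹ * ((Real.sqrt 2 : ℝ) : ℂ)⁻¹ = 2⁻¹ := by
    rw [← mul_inv, ← ofReal_mul, Real.mul_self_sqrt zero_le_two, ofReal_ofNat]
  have hexpand : (γ4 - γ0) * (γ4 + γ0) = (2 : ℂ) • (γ4 * γ0 - 1) := by
    rw [sub_mul, mul_add, mul_add, γ4_mul_self, γ0_mul_self, γ0_mul_γ4, two_smul]
    abel
  rw [γminus, γplus, smul_mul_smul_comm, hsqrt, hexpand, inv_smul_smul₀ two_ne_zero]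

theorem γ1_mul_γ2 : γ1 * γ2 = -I • ((1 : Matrix (Fin 2) (Fin 2) ℂ) ⊗ₖ σ3) := by
  rw [γ1, γ2, ← mul_kronecker_mul, smul_mul_smul_comm, σ2_mul_self, σ1_mul_σ2, I_mul_I,
    smul_kronecker, kronecker_smul, smul_smul, neg_one_mul]

/-- The common spectrum `(1, -1)` of the Pauli matrices. -/
def pauliEigenvalue : Fin 2 → ℂ := ![1, -1]

theorem σ3_eq_diagonal : σ3 = diagonal pauliEigenvalue := by
  simp [σ3, pauliEigenvalue, diagonal_fin_two]

/-- The change of basis diagonalizing `σ2`: its columns are eigenvectors, in the order of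
`pauliEigenvalue`. -/
def σ2Eigenbasis : Matrix (Fin 2) (Fin 2) ℂ := !![1, 1; I, -I]

theorem isUnit_det_σ2Eigenbasis : IsUnit σ2Eigenbasis.det := by
  have hdet : σ2Eigenbasis.det = -2 * I := by
    rw [σ2Eigenbasis, det_fin_two_of]
    ring
  rw [hdet, isUnit_iff_ne_zero]
  exact mul_ne_zero (neg_ne_zero.mpr two_ne_zero) I_ne_zero

theorem σ2_mul_σ2Eigenbasis :
    σ2 * σ2Eigenbasis = σ2Eigenbasis * diagonal pauliEigenvalue := by
  simp [σ2, σ2Eigenbasis, pauliEigenvalue, diagonal_fin_two]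

theorem pauliEigenvalue_sq (i : Fin 2) : pauliEigenvalue i ^ 2 = 1 := by
  fin_cases i <;> simp [pauliEigenvalue]

theorem pauliEigenvalue_injective : Function.Injective pauliEigenvalue := by
  have hne : (1 : ℂ) ≠ -1 := by norm_num
  simp [Function.Injective, Fin.forall_fin_two, pauliEigenvalue, hne, hne.symm]

/-- The matrix `M(b)` of the Killing spinor invariance equation at the origin, for a complex
parameter `b`. -/
def killingMatrix (b : ℂ) : Matrix (Fin 2 × Fin 2) (Fin 2 × Fin 2) ℂ :=
  I • ((3 : ℂ) • (1 : Matrix (Fin 2 × Fin 2) (Fin 2 × Fin 2) ℂ) + γminus * γplus) +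
    (2 * b) • (γ1 * γ2)

theorem killingMatrix_eq_smul_kroneckerSum (b : ℂ) :
    killingMatrix b = I • (((2 : ℂ) • (1 : Matrix (Fin 2) (Fin 2) ℂ) + σ2) ⊗ₖ
        (1 : Matrix (Fin 2) (Fin 2) ℂ) +
      (1 : Matrix (Fin 2) (Fin 2) ℂ) ⊗ₖ (-(2 * b) • σ3)) := by
  rw [killingMatrix, γminus_mul_γplus, γ4_mul_γ0, γ1_mul_γ2, add_kronecker, smul_kronecker,
    one_kronecker_one, kronecker_smul]
  module

/-- The eigenvalues of `-i M(b)`, indexed by the pairs of eigenvalues of `σ2` and `σ3`. -/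
def killingEigenvalue (b : ℂ) (p : Fin 2 × Fin 2) : ℂ :=
  (2 + pauliEigenvalue p.1) + -(2 * b) * pauliEigenvalue p.2

theorem finrank_ker_killingMatrix (b : ℂ) :
    Module.finrank ℂ (LinearMap.ker (killingMatrix b).mulVecLin) =
      Nat.card {p // killingEigenvalue b p = 0} := by
  have hσ2 : ((2 : ℂ) • (1 : Matrix (Fin 2) (Fin 2) ℂ) + σ2) * σ2Eigenbasis =
      σ2Eigenbasis * diagonal fun i => 2 + pauliEigenvalue i := by
    rw [← diagonal_add, ← smul_one_eq_diagonal, add_mul, mul_add, σ2_mul_σ2Eigenbasis,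
      smul_one_mul, mul_smul_one]
  have hσ3 : (-(2 * b) • σ3) * 1 =
      1 * diagonal fun j => -(2 * b) * pauliEigenvalue j := by
    rw [σ3_eq_diagonal, ← diagonal_smul, Matrix.mul_one, Matrix.one_mul]
    rfl
  rw [killingMatrix_eq_smul_kroneckerSum, mulVecLin, map_smul,
    LinearMap.ker_smul _ _ I_ne_zero]
  exact finrank_ker_kroneckerSum isUnit_det_σ2Eigenbasis (by simp) hσ2 hσ3

theorem prod_killingEigenvalue (b : ℂ) :
    ∏ p, killingEigenvalue b p = (4 * b ^ 2 - 1) * (4 * b ^ 2 - 9) := by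
  simp only [killingEigenvalue, pauliEigenvalue, Fintype.prod_prod_type, Fin.prod_univ_two,
    cons_val_zero, cons_val_one]
  ring

theorem exists_killingEigenvalue_eq_zero_iff (b : ℂ) :
    (∃ p, killingEigenvalue b p = 0) ↔ 4 * b ^ 2 = 1 ∨ 4 * b ^ 2 = 9 := by
  simpa only [prod_killingEigenvalue, mul_eq_zero, sub_eq_zero, Finset.mem_univ, true_and] using
    (Finset.prod_eq_zero_iff (s := Finset.univ) (f := killingEigenvalue b)).symm

theorem eq_of_killingEigenvalue_eq_zero {b : ℂ} {p q : Fin 2 × Fin 2}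
    (hp : killingEigenvalue b p = 0) (hq : killingEigenvalue b q = 0) : p = q := by
  rw [killingEigenvalue] at hp hq
  have hsign := pauliEigenvalue_sq
  have hfst : pauliEigenvalue p.1 = pauliEigenvalue q.1 := by
    have hsq : (2 + pauliEigenvalue p.1) ^ 2 = (2 + pauliEigenvalue q.1) ^ 2 := by
      linear_combination (2 + pauliEigenvalue p.1 + 2 * b * pauliEigenvalue p.2) * hp -
        (2 + pauliEigenvalue q.1 + 2 * b * pauliEigenvalue q.2) * hq +
        4 * b ^ 2 * (hsign p.2 - hsign q.2)
    linear_combination (hsq - hsign p.1 + hsign q.1) / 4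
  have hb : b ≠ 0 := by
    rintro rfl
    have hneg_two : pauliEigenvalue p.1 = -2 := by linear_combination hp
    have hfour := hsign p.1
    norm_num [hneg_two] at hfour
  have hsnd : pauliEigenvalue p.2 = pauliEigenvalue q.2 :=
    mul_left_cancel₀ hb (by linear_combination (hq - hp + hfst) / 2)
  exact Prod.ext (pauliEigenvalue_injective hfst) (pauliEigenvalue_injective hsnd)

theorem stmt_17_general (b : ℂ) :
    (LinearMap.ker (killingMatrix b).mulVecLin ≠ ⊥ ↔ 4 * b ^ 2 = 1 ∨ 4 * b ^ 2 = 9) ∧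
    (4 * b ^ 2 = 1 → Module.finrank ℂ (LinearMap.ker (killingMatrix b).mulVecLin) = 1) ∧
    (4 * b ^ 2 = 9 → Module.finrank ℂ (LinearMap.ker (killingMatrix b).mulVecLin) = 1) := by
  have hsub : Subsingleton {p // killingEigenvalue b p = 0} :=
    ⟨fun p q => Subtype.ext (eq_of_killingEigenvalue_eq_zero p.2 q.2)⟩
  have hker : LinearMap.ker (killingMatrix b).mulVecLin ≠ ⊥ ↔
      Nonempty {p // killingEigenvalue b p = 0} := by
    rw [ne_eq, ← Submodule.finrank_eq_zero (R := ℂ), finrank_ker_killingMatrix,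
      ← ne_eq, ← Nat.pos_iff_ne_zero, Finite.card_pos_iff]
  have hone (h : 4 * b ^ 2 = 1 ∨ 4 * b ^ 2 = 9) :
      Module.finrank ℂ (LinearMap.ker (killingMatrix b).mulVecLin) = 1 := by
    rw [finrank_ker_killingMatrix, Nat.card_eq_one_iff_unique]
    exact ⟨hsub, nonempty_subtype.mpr ((exists_killingEigenvalue_eq_zero_iff b).mpr h)⟩
  rw [hker, nonempty_subtype, exists_killingEigenvalue_eq_zero_iff]
  exact ⟨Iff.rfl, hone ∘ .inl, hone ∘ .inr⟩

/-- The matrix `M(b) = i(3I₄ + γ₋γ₊) + 2b γ₁γ₂` has nonzero kernel iff `4b² = 1` or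
`4b² = 9`, and in each of those cases the kernel is 1-dimensional (the case `X₁` of
the Cahen–Wallach reductions). -/
theorem stmt_17 (b : ℝ) :
    (LinearMap.ker (I • ((3 : ℂ) • (1 : Matrix (Fin 2 × Fin 2) (Fin 2 × Fin 2) ℂ)
        + γminus * γplus) + ((2 * b : ℝ) : ℂ) • (γ1 * γ2)).mulVecLin ≠ ⊥ ↔
      4 * b ^ 2 = 1 ∨ 4 * b ^ 2 = 9) ∧
    (4 * b ^ 2 = 1 →
      Module.finrank ℂ (LinearMap.ker
        (I • ((3 : ℂ) • (1 : Matrix (Fin 2 × Fin 2) (Fin 2 × Fin 2) ℂ)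
          + γminus * γplus) + ((2 * b : ℝ) : ℂ) • (γ1 * γ2)).mulVecLin) = 1) ∧
    (4 * b ^ 2 = 9 →
      Module.finrank ℂ (LinearMap.ker
        (I • ((3 : ℂ) • (1 : Matrix (Fin 2 × Fin 2) (Fin 2 × Fin 2) ℂ)
          + γminus * γplus) + ((2 * b : ℝ) : ℂ) • (γ1 * γ2)).mulVecLin) = 1) := by
  rw [ofReal_mul, ofReal_ofNat, ← killingMatrix]
  exact_mod_cast stmt_17_general b

end
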